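/- For every complex number q with |q| < 1, φ(q)·a(q) = ∑_{k∈ℤ} (−1)^k q^{k(5k+3)/2}. (Equation (2.17), a Jacobi-triple-product evaluation of the first Rogers–Ramanujan product: ∏_{n≥1}(1−q^{5n})(1−q^{5n−1})(1−q^{5n−4}) = ∑_{k∈ℤ}(−1)^k q^{k(5k+3)/2}.) -/

import Mathlib

open scoped BigOperators

/-- The Euler function `φ(q) = ∏_{n=1}^∞ (1 - q^n)`. -/
noncomputable def eulerPhi (q : ℂ) : ℂ := ∏' n : ℕ, (1 - q ^ (n + 1))

/-- The first Rogers–Ramanujan series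
`a(q) = ∏_{n=1}^∞ 1/((1 - q^{5n-2})(1 - q^{5n-3}))`. -/
noncomputable def rrA (q : ℂ) : ℂ :=
  ∏' n : ℕ, ((1 - q ^ (5 * n + 3)) * (1 - q ^ (5 * n + 2)))⁻¹

/-- The second Rogers–Ramanujan series
`b(q) = ∏_{n=1}^∞ 1/((1 - q^{5n-1})(1 - q^{5n-4}))`. -/
noncomputable def rrB (q : ℂ) : ℂ :=
  ∏' n : ℕ, ((1 - q ^ (5 * n + 4)) * (1 - q ^ (5 * n + 1)))⁻¹

/-- `G(q) = ∏_{n=1}^∞ (1-q^{15n})(1-q^{15n-7})(1-q^{15n-8})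
          - q ∏_{n=1}^∞ (1-q^{15n})(1-q^{15n-13})(1-q^{15n-2})`. -/
noncomputable def Gf (q : ℂ) : ℂ :=
  (∏' n : ℕ, (1 - q ^ (15 * n + 15)) * (1 - q ^ (15 * n + 8)) * (1 - q ^ (15 * n + 7)))
  - q * ∏' n : ℕ, (1 - q ^ (15 * n + 15)) * (1 - q ^ (15 * n + 2)) * (1 - q ^ (15 * n + 13))

/-- `H(q) = ∏_{n=1}^∞ (1-q^{15n})(1-q^{15n-4})(1-q^{15n-11})
          + q ∏_{n=1}^∞ (1-q^{15n})(1-q^{15n-14})(1-q^{15n-1})`. -/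
noncomputable def Hf (q : ℂ) : ℂ :=
  (∏' n : ℕ, (1 - q ^ (15 * n + 15)) * (1 - q ^ (15 * n + 11)) * (1 - q ^ (15 * n + 4)))
  + q * ∏' n : ℕ, (1 - q ^ (15 * n + 15)) * (1 - q ^ (15 * n + 1)) * (1 - q ^ (15 * n + 14))

/-!
The triple product is proved in Ramanujan's symmetric form: with `p = a b` and `|p| < 1`,
`∏ n, (1 - p ^ (n + 1)) (1 + a p ^ n) (1 + b p ^ n)` equals
`∑ k : ℤ, a ^ (k (k + 1) / 2) b ^ (k (k - 1) / 2)`. The finite product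
`(∏ i < m, (1 + a p ^ i)) (∏ i < n, (1 + b p ^ i))` expands into the same monomials with the
Gaussian binomials `[m + n, n + k]` as coefficients: a factor with `a` is absorbed by the
`q`-Pascal recurrence, and the symmetry `(a, b, k) ↦ (b, a, -k)` takes care of the factors with
`b`. For `m = n → ∞` the coefficients stay bounded and tend to `1 / (p; p)_∞`, so dominated
convergence gives the identity. Taking `a = -q ^ 4` and `b = -q` makes `p = q ^ 5`; no division by
`q` occurs, so `q = 0` is not exceptional.
-/

open Filter Finset Topology

/-- The triangular number `k * (k + 1) / 2`, for an integer `k`; it is always a natural number. -/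
def triangular (k : ℤ) : ℕ := (k * (k + 1) / 2).toNat

theorem two_mul_natCast_triangular (k : ℤ) : 2 * (triangular k : ℤ) = k * (k + 1) := by
  have hnonneg : 0 ≤ k * (k + 1) := by
    rcases lt_or_ge k 0 with hk | hk <;> nlinarith
  have hdvd : 2 ∣ k * (k + 1) := (Int.even_mul_succ_self k).two_dvd
  rw [triangular, Int.toNat_of_nonneg (by omega), Int.mul_ediv_cancel' hdvd]

theorem natCast_triangular_sub_one (k : ℤ) : (triangular (k - 1) : ℤ) = triangular k - k := by
  linarith [two_mul_natCast_triangular k, two_mul_natCast_triangular (k - 1)]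

theorem triangular_neg (k : ℤ) : triangular (-k) = triangular (k - 1) := by
  zify
  linarith [two_mul_natCast_triangular (-k), two_mul_natCast_triangular (k - 1)]

section RamanujanTheta

variable {R : Type*} [CommSemiring R]

/-- The general term of Ramanujan's theta function
`f(a, b) = ∑ k : ℤ, a ^ (k (k + 1) / 2) * b ^ (k (k - 1) / 2)`. Both exponents are natural numbers,
so `a` and `b` may vanish. -/
def ramanujanThetaTerm (a b : R) (k : ℤ) : R := a ^ triangular k * b ^ triangular (k - 1)

theorem ramanujanThetaTerm_neg (a b : R) (k : ℤ) :
    ramanujanThetaTerm a b (-k) = ramanujanThetaTerm b a k := by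
  rw [ramanujanThetaTerm, ramanujanThetaTerm, triangular_neg, ← neg_add', triangular_neg,
    add_sub_cancel_right, mul_comm]

theorem pow_mul_ramanujanThetaTerm (a b : R) {k : ℤ} {j m : ℕ} (h : k + j = m + 1) :
    (a * b) ^ j * ramanujanThetaTerm a b k =
      a * (a * b) ^ m * ramanujanThetaTerm a b (k - 1) := by
  have ha : j + triangular k = 1 + m + triangular (k - 1) := by
    zify; linarith [natCast_triangular_sub_one k]
  have hb : j + triangular (k - 1) = m + triangular (k - 1 - 1) := by
    zify; linarith [natCast_triangular_sub_one (k - 1)]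
  calc (a * b) ^ j * ramanujanThetaTerm a b k
      = a ^ (j + triangular k) * b ^ (j + triangular (k - 1)) := by
        rw [ramanujanThetaTerm]; ring
    _ = a * (a * b) ^ m * ramanujanThetaTerm a b (k - 1) := by
        rw [ha, hb, ramanujanThetaTerm]; ring

theorem ramanujanThetaTerm_natCast_succ (a b : R) (n : ℕ) :
    ramanujanThetaTerm a b (n + 1 : ℕ) = a * (a * b) ^ n * ramanujanThetaTerm a b n := by
  simpa using pow_mul_ramanujanThetaTerm a b (k := (n + 1 : ℕ)) (j := 0) (m := n) (by simp)

end RamanujanTheta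

section QPochhammer

variable {R : Type*} [CommRing R]

/-- The finite `q`-Pochhammer symbol `(a; q)_n = (1 - a) (1 - a q) ⋯ (1 - a q ^ (n - 1))`. -/
def qPochhammer (a q : R) (n : ℕ) : R := ∏ i ∈ range n, (1 - a * q ^ i)

theorem qPochhammer_zero (a q : R) : qPochhammer a q 0 = 1 := prod_range_zero _

theorem qPochhammer_succ (a q : R) (n : ℕ) :
    qPochhammer a q (n + 1) = qPochhammer a q n * (1 - a * q ^ n) :=
  prod_range_succ _ n

end QPochhammer

section GaussianBinom

variable {K : Type*} [Field K]

/-- The Gaussian binomial coefficient `(q; q)_n / ((q; q)_k (q; q)_{n - k})`, extended by zero to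
all integers `k` so that the recurrence in `n` needs no boundary terms. The formula is meaningful
only if no `(q; q)_i` vanishes. -/
def gaussianBinom (q : K) (n : ℕ) (k : ℤ) : K :=
  if 0 ≤ k ∧ k ≤ n then
    qPochhammer q q n / (qPochhammer q q k.toNat * qPochhammer q q (n - k).toNat)
  else 0

theorem gaussianBinom_of_neg (q : K) (n : ℕ) {k : ℤ} (hk : k < 0) : gaussianBinom q n k = 0 :=
  if_neg fun h => by omega

theorem gaussianBinom_of_lt (q : K) {n : ℕ} {k : ℤ} (hk : n < k) : gaussianBinom q n k = 0 :=
  if_neg fun h => by omega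

theorem gaussianBinom_add (q : K) (i j : ℕ) :
    gaussianBinom q (i + j) i =
      qPochhammer q q (i + j) / (qPochhammer q q i * qPochhammer q q j) := by
  simp [gaussianBinom]

theorem gaussianBinom_symm (q : K) (n : ℕ) (k : ℤ) :
    gaussianBinom q n (n - k) = gaussianBinom q n k := by
  have hrange : 0 ≤ (n : ℤ) - k ∧ (n : ℤ) - k ≤ n ↔ 0 ≤ k ∧ k ≤ n := by omega
  simp only [gaussianBinom, hrange, sub_sub_cancel, mul_comm]

theorem gaussianBinom_self {q : K} (hq : ∀ n, qPochhammer q q n ≠ 0) (n : ℕ) :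
    gaussianBinom q n n = 1 := by
  simpa [qPochhammer_zero, hq n] using gaussianBinom_add q n 0

theorem gaussianBinom_zero_right {q : K} (hq : ∀ n, qPochhammer q q n ≠ 0) (n : ℕ) :
    gaussianBinom q n 0 = 1 := by
  simpa [gaussianBinom_self hq] using gaussianBinom_symm q n n

theorem gaussianBinom_succ {q : K} (hq : ∀ n, qPochhammer q q n ≠ 0) (n : ℕ) (k : ℤ) :
    gaussianBinom q (n + 1) k =
      gaussianBinom q n k + q ^ (n + 1 - k).toNat * gaussianBinom q n (k - 1) := by
  rcases lt_trichotomy k 0 with hneg | rfl | hpos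
  · simp [gaussianBinom_of_neg, hneg, show k - 1 < 0 by omega]
  · simp [gaussianBinom_of_neg, gaussianBinom_zero_right hq]
  rcases lt_trichotomy k (n + 1) with hlt | rfl | hgt
  · obtain ⟨i, rfl⟩ : ∃ i : ℕ, k = (i + 1 : ℕ) := ⟨(k - 1).toNat, by omega⟩
    obtain ⟨j, rfl⟩ : ∃ j : ℕ, n = i + 1 + j := ⟨n - (i + 1), by omega⟩
    have hexp : (((i + 1 + j : ℕ) : ℤ) + 1 - (i + 1 : ℕ)).toNat = j + 1 := by omega
    have hpred : gaussianBinom q (i + 1 + j) ((i + 1 : ℕ) - 1) = qPochhammer q q (i + 1 + j) /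
        (qPochhammer q q i * qPochhammer q q (j + 1)) := by
      rw [Nat.cast_succ, add_sub_cancel_right, add_assoc, add_comm 1 j, gaussianBinom_add]
    have hi := hq (i + 1)
    have hj := hq (j + 1)
    rw [hexp, hpred, gaussianBinom_add, add_assoc, gaussianBinom_add, ← add_assoc]
    rw [qPochhammer_succ] at hi hj
    simp only [qPochhammer_succ q q i, qPochhammer_succ q q j, qPochhammer_succ q q (i + 1 + j)]
    obtain ⟨hi, hi'⟩ := mul_ne_zero_iff.mp hi
    obtain ⟨hj, hj'⟩ := mul_ne_zero_iff.mp hj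
    field_simp
    ring
  · have hself := gaussianBinom_self hq (n + 1)
    push_cast at hself
    simp [gaussianBinom_of_lt, hself, gaussianBinom_self hq]
  · simp [gaussianBinom_of_lt, hgt, show (n : ℤ) < k by omega, show (n : ℤ) < k - 1 by omega]

variable [TopologicalSpace K]

theorem hasSum_gaussianBinom_mul_ramanujanThetaTerm_swap {a b s : K} {m n : ℕ}
    (h : HasSum (fun k : ℤ => gaussianBinom (a * b) (m + n) (n + k) * ramanujanThetaTerm a b k) s) :
    HasSum (fun k : ℤ => gaussianBinom (b * a) (n + m) (m + k) * ramanujanThetaTerm b a k) s := by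
  convert (Equiv.neg ℤ).hasSum_iff.mpr h using 1
  ext k
  have hindex : (n + -k : ℤ) = (n + m : ℕ) - (m + k) := by push_cast; ring
  simp only [Function.comp_apply, Equiv.neg_apply]
  rw [ramanujanThetaTerm_neg, hindex, add_comm m n, gaussianBinom_symm, mul_comm b a]

variable [IsTopologicalSemiring K]

theorem hasSum_gaussianBinom_mul_ramanujanThetaTerm_succ_left {a b s : K} {m n : ℕ}
    (hab : ∀ i, qPochhammer (a * b) (a * b) i ≠ 0)
    (h : HasSum (fun k : ℤ => gaussianBinom (a * b) (m + n) (n + k) * ramanujanThetaTerm a b k) s) :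
    HasSum (fun k : ℤ => gaussianBinom (a * b) (m + 1 + n) (n + k) * ramanujanThetaTerm a b k)
      (s * (1 + a * (a * b) ^ m)) := by
  have hshift := ((Equiv.subRight (1 : ℤ)).hasSum_iff.mpr h).mul_left (a * (a * b) ^ m)
  convert h.add hshift using 1
  · ext k
    have hterm : (a * b) ^ (m + 1 - k).toNat * gaussianBinom (a * b) (m + n) (n + k - 1) *
        ramanujanThetaTerm a b k = a * (a * b) ^ m *
          (gaussianBinom (a * b) (m + n) (n + k - 1) * ramanujanThetaTerm a b (k - 1)) := by
      rcases le_or_gt k (m + 1) with hk | hk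
      · linear_combination gaussianBinom (a * b) (m + n) (n + k - 1) *
          pow_mul_ramanujanThetaTerm a b (k := k) (j := (m + 1 - k).toNat) (m := m) (by omega)
      · rw [gaussianBinom_of_lt _ (by push_cast; omega)]
        ring
    have hexp : ((m + n : ℕ) + 1 - (n + k) : ℤ) = m + 1 - k := by push_cast; ring
    simp only [Function.comp_apply, Equiv.subRight_apply]
    rw [add_right_comm m 1 n, gaussianBinom_succ hab, hexp, add_mul, hterm, add_sub_assoc]
  · ring

theorem hasSum_gaussianBinom_mul_ramanujanThetaTerm_succ_right {a b s : K} {m n : ℕ}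
    (hab : ∀ i, qPochhammer (a * b) (a * b) i ≠ 0)
    (h : HasSum (fun k : ℤ => gaussianBinom (a * b) (m + n) (n + k) * ramanujanThetaTerm a b k) s) :
    HasSum (fun k : ℤ => gaussianBinom (a * b) (m + (n + 1)) ((n + 1 : ℕ) + k) *
      ramanujanThetaTerm a b k) (s * (1 + b * (a * b) ^ n)) := by
  have hba : ∀ i, qPochhammer (b * a) (b * a) i ≠ 0 := by rwa [mul_comm b a]
  have hswap := hasSum_gaussianBinom_mul_ramanujanThetaTerm_swap
    (hasSum_gaussianBinom_mul_ramanujanThetaTerm_succ_left hba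
      (hasSum_gaussianBinom_mul_ramanujanThetaTerm_swap h))
  rwa [mul_comm b a] at hswap

theorem hasSum_gaussianBinom_mul_ramanujanThetaTerm {a b : K}
    (hab : ∀ i, qPochhammer (a * b) (a * b) i ≠ 0) (m n : ℕ) :
    HasSum (fun k : ℤ => gaussianBinom (a * b) (m + n) (n + k) * ramanujanThetaTerm a b k)
      (qPochhammer (-a) (a * b) m * qPochhammer (-b) (a * b) n) := by
  induction m with
  | zero =>
    induction n with
    | zero =>
      convert hasSum_single (0 : ℤ) fun k hk => ?_ using 1
      · simp [gaussianBinom, ramanujanThetaTerm, triangular, qPochhammer_zero]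
      · rcases lt_or_gt_of_ne hk with hk | hk
        · simp [gaussianBinom_of_neg, hk]
        · simp [gaussianBinom_of_lt, hk]
    | succ n ih =>
      rw [qPochhammer_succ, ← mul_assoc, neg_mul, sub_neg_eq_add]
      exact hasSum_gaussianBinom_mul_ramanujanThetaTerm_succ_right hab ih
  | succ m ih =>
    rw [qPochhammer_succ, mul_right_comm, neg_mul, sub_neg_eq_add]
    exact hasSum_gaussianBinom_mul_ramanujanThetaTerm_succ_left hab ih

end GaussianBinom

section Convergence

variable {K : Type*} [NormedField K] {q : K}

theorem one_sub_mul_pow_ne_zero {a : K} (ha : ‖a‖ < 1) (hq : ‖q‖ < 1) (n : ℕ) :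
    1 - a * q ^ n ≠ 0 := by
  have hlt : ‖a * q ^ n‖ < 1 := by
    rw [norm_mul, norm_pow]
    exact mul_lt_one_of_nonneg_of_lt_one_left (norm_nonneg a) ha
      (pow_le_one₀ (norm_nonneg q) hq.le)
  intro h
  rw [← sub_eq_zero.mp h, norm_one] at hlt
  exact lt_irrefl 1 hlt

theorem qPochhammer_self_ne_zero (hq : ‖q‖ < 1) (n : ℕ) : qPochhammer q q n ≠ 0 :=
  prod_ne_zero_iff.mpr fun i _ => one_sub_mul_pow_ne_zero hq hq i

theorem summable_norm_neg_mul_pow (a : K) (hq : ‖q‖ < 1) :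
    Summable fun n : ℕ => ‖-(a * q ^ n)‖ := by
  simpa only [norm_neg, norm_mul, norm_pow] using
    (summable_geometric_of_lt_one (norm_nonneg q) hq).mul_left ‖a‖

theorem summable_norm_ramanujanThetaTerm_natCast {a b : K} (hab : ‖a * b‖ < 1) :
    Summable fun n : ℕ => ‖ramanujanThetaTerm a b n‖ := by
  have hratio : Tendsto (fun n : ℕ => ‖a * (a * b) ^ n‖) atTop (𝓝 0) := by
    simpa using ((tendsto_pow_atTop_nhds_zero_of_norm_lt_one hab).const_mul a).norm
  refine summable_of_ratio_norm_eventually_le (r := 1 / 2) (by norm_num) ?_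
  filter_upwards [hratio.eventually_le_const (show (0 : ℝ) < 1 / 2 by norm_num)] with n hn
  rw [ramanujanThetaTerm_natCast_succ, norm_norm, norm_norm, norm_mul]
  exact mul_le_mul_of_nonneg_right hn (norm_nonneg _)

theorem summable_norm_ramanujanThetaTerm {a b : K} (hab : ‖a * b‖ < 1) :
    Summable fun k : ℤ => ‖ramanujanThetaTerm a b k‖ := by
  refine .of_nat_of_neg (summable_norm_ramanujanThetaTerm_natCast hab) ?_
  simp only [ramanujanThetaTerm_neg]
  exact summable_norm_ramanujanThetaTerm_natCast (by rwa [mul_comm])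

variable [CompleteSpace K]

theorem multipliable_one_sub_mul_pow (a : K) (hq : ‖q‖ < 1) :
    Multipliable fun n : ℕ => 1 - a * q ^ n := by
  simpa only [sub_eq_add_neg] using
    multipliable_one_add_of_summable (summable_norm_neg_mul_pow a hq)

theorem tprod_one_sub_mul_pow_ne_zero {a : K} (ha : ‖a‖ < 1) (hq : ‖q‖ < 1) :
    ∏' n : ℕ, (1 - a * q ^ n) ≠ 0 := by
  simp only [sub_eq_add_neg]
  exact tprod_one_add_ne_zero_of_summable
    (fun n => by simpa only [sub_eq_add_neg] using one_sub_mul_pow_ne_zero ha hq n)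
    (summable_norm_neg_mul_pow a hq)

theorem tendsto_qPochhammer (a : K) (hq : ‖q‖ < 1) :
    Tendsto (qPochhammer a q) atTop (𝓝 (∏' n : ℕ, (1 - a * q ^ n))) :=
  (multipliable_one_sub_mul_pow a hq).tendsto_prod_tprod_nat

theorem tendsto_inv_qPochhammer_self (hq : ‖q‖ < 1) :
    Tendsto (fun n => (qPochhammer q q n)⁻¹) atTop (𝓝 (∏' n : ℕ, (1 - q * q ^ n))⁻¹) :=
  (tendsto_qPochhammer q hq).inv₀ (tprod_one_sub_mul_pow_ne_zero hq hq)

theorem exists_norm_gaussianBinom_le (hq : ‖q‖ < 1) :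
    ∃ C, ∀ n k, ‖gaussianBinom q n k‖ ≤ C := by
  obtain ⟨A, hA⟩ := (tendsto_qPochhammer q hq).norm.bddAbove_range
  obtain ⟨B, hB⟩ := (tendsto_inv_qPochhammer_self hq).norm.bddAbove_range
  replace hA n : ‖qPochhammer q q n‖ ≤ A := hA ⟨n, rfl⟩
  replace hB n : ‖(qPochhammer q q n)⁻¹‖ ≤ B := hB ⟨n, rfl⟩
  have hA₀ : 0 ≤ A := (norm_nonneg _).trans (hA 0)
  have hB₀ : 0 ≤ B := (norm_nonneg _).trans (hB 0)
  refine ⟨A * (B * B), fun n k => ?_⟩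
  unfold gaussianBinom
  split_ifs
  · rw [div_eq_mul_inv, mul_inv, norm_mul, norm_mul]
    gcongr
    exacts [hA _, hB _, hB _]
  · rw [norm_zero]
    positivity

theorem tendsto_gaussianBinom_central (hq : ‖q‖ < 1) (k : ℤ) :
    Tendsto (fun N : ℕ => gaussianBinom q (N + N) (N + k)) atTop
      (𝓝 (∏' n : ℕ, (1 - q * q ^ n))⁻¹) := by
  have htoNat (l : ℤ) : Tendsto (fun N : ℕ => (N + l).toNat) atTop atTop :=
    tendsto_atTop.mpr fun b => (eventually_ge_atTop (b + l.natAbs)).mono fun N hN => by omega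
  have hlim := ((tendsto_qPochhammer q hq).comp (tendsto_id.atTop_add_atTop tendsto_id)).mul
    (((tendsto_inv_qPochhammer_self hq).comp (htoNat k)).mul
      ((tendsto_inv_qPochhammer_self hq).comp (htoNat (-k))))
  rw [mul_inv_cancel_left₀ (tprod_one_sub_mul_pow_ne_zero hq hq)] at hlim
  refine hlim.congr' ?_
  filter_upwards [eventually_ge_atTop k.natAbs] with N hN
  have hrange : 0 ≤ (N + k : ℤ) ∧ (N + k : ℤ) ≤ (N + N : ℕ) := by omega
  have hsub : ((N + N : ℕ) - (N + k) : ℤ) = N + -k := by push_cast; ring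
  rw [gaussianBinom, if_pos hrange, hsub, div_eq_mul_inv, mul_inv]
  rfl

theorem jacobi_triple_product {a b : K} (hab : ‖a * b‖ < 1) :
    ∏' n : ℕ, (1 - (a * b) ^ (n + 1)) * ((1 + a * (a * b) ^ n) * (1 + b * (a * b) ^ n)) =
      ∑' k : ℤ, ramanujanThetaTerm a b k := by
  obtain ⟨C, hC⟩ := exists_norm_gaussianBinom_le hab
  have hfinite N := (hasSum_gaussianBinom_mul_ramanujanThetaTerm
    (qPochhammer_self_ne_zero hab) N N).tsum_eq
  have hlim : Tendsto (fun N => ∑' k : ℤ,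
      gaussianBinom (a * b) (N + N) (N + k) * ramanujanThetaTerm a b k) atTop
      (𝓝 (∑' k : ℤ, (∏' n : ℕ, (1 - a * b * (a * b) ^ n))⁻¹ * ramanujanThetaTerm a b k)) :=
    tendsto_tsum_of_dominated_convergence ((summable_norm_ramanujanThetaTerm hab).mul_left C)
      (fun k => (tendsto_gaussianBinom_central hab k).mul_const _)
      (.of_forall fun N k => by rw [norm_mul]; gcongr; exact hC _ _)
  simp only [hfinite, tsum_mul_left] at hlim
  have hprod := tendsto_nhds_unique hlim
    ((tendsto_qPochhammer (-a) hab).mul (tendsto_qPochhammer (-b) hab))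
  have hmul (c : K) := multipliable_one_sub_mul_pow c hab
  calc ∏' n : ℕ, (1 - (a * b) ^ (n + 1)) * ((1 + a * (a * b) ^ n) * (1 + b * (a * b) ^ n))
      = ∏' n : ℕ, (1 - a * b * (a * b) ^ n) *
          ((1 - -a * (a * b) ^ n) * (1 - -b * (a * b) ^ n)) := by
        simp only [neg_mul, sub_neg_eq_add, pow_succ']
    _ = (∏' n : ℕ, (1 - a * b * (a * b) ^ n)) *
          ((∏' n : ℕ, (1 - -a * (a * b) ^ n)) * ∏' n : ℕ, (1 - -b * (a * b) ^ n)) := by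
        rw [(hmul _).tprod_mul ((hmul _).mul (hmul _)), (hmul _).tprod_mul (hmul _)]
    _ = ∑' k : ℤ, ramanujanThetaTerm a b k := by
        rw [← hprod, mul_inv_cancel_left₀ (tprod_one_sub_mul_pow_ne_zero hab hab)]

end Convergence

theorem hasProd_prod_fin_mul_add {M : Type*} [CommMonoid M] [TopologicalSpace M]
    [ContinuousMul M] [RegularSpace M] {f : ℕ → M} {x : M} (hf : HasProd f x) (d : ℕ) [NeZero d] :
    HasProd (fun n => ∏ j : Fin d, f (n * d + j)) x :=
  ((Nat.divModEquiv d).symm.hasProd_iff.mpr hf).prod_fiberwise fun _ => hasProd_fintype _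

theorem hasProd_eulerPhi {q : ℂ} (hq : ‖q‖ < 1) :
    HasProd (fun n : ℕ => 1 - q ^ (n + 1)) (eulerPhi q) := by
  simpa only [eulerPhi, ← pow_succ'] using (multipliable_one_sub_mul_pow q hq).hasProd

theorem hasProd_rrA {q : ℂ} (hq : ‖q‖ < 1) :
    HasProd (fun n : ℕ => ((1 - q ^ (5 * n + 3)) * (1 - q ^ (5 * n + 2)))⁻¹) (rrA q) := by
  have hnorm {c : ℕ} (hc : c ≠ 0) : ‖q ^ c‖ < 1 := by
    rw [norm_pow]
    exact pow_lt_one₀ (norm_nonneg q) hq hc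
  have hprod (c : ℕ) : HasProd (fun n : ℕ => 1 - q ^ (5 * n + c))
      (∏' n : ℕ, (1 - q ^ c * (q ^ 5) ^ n)) := by
    simpa only [← pow_mul, ← pow_add, add_comm c] using
      (multipliable_one_sub_mul_pow (q ^ c) (hnorm (c := 5) (by norm_num))).hasProd
  have hne {c : ℕ} (hc : c ≠ 0) : ∏' n : ℕ, (1 - q ^ c * (q ^ 5) ^ n) ≠ 0 :=
    tprod_one_sub_mul_pow_ne_zero (hnorm hc) (hnorm (by norm_num))
  exact (((hprod 3).mul (hprod 2)).inv₀
    (mul_ne_zero (hne (by norm_num)) (hne (by norm_num)))).multipliable.hasProd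

theorem eulerPhi_mul_rrA {q : ℂ} (hq : ‖q‖ < 1) :
    eulerPhi q * rrA q =
      ∏' n : ℕ, (1 - q ^ (5 * n + 5)) * ((1 - q ^ (5 * n + 4)) * (1 - q ^ (5 * n + 1))) := by
  have hblocks := (hasProd_prod_fin_mul_add (hasProd_eulerPhi hq) 5).mul (hasProd_rrA hq)
  rw [← hblocks.tprod_eq]
  refine tprod_congr fun n => ?_
  have hne (c : ℕ) : 1 - q ^ (5 * n + (c + 1)) ≠ 0 := by
    rw [← add_assoc, pow_succ']
    exact one_sub_mul_pow_ne_zero hq hq _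
  have h₂ : 1 - q ^ (5 * n + 2) ≠ 0 := hne 1
  have h₃ : 1 - q ^ (5 * n + 3) ≠ 0 := hne 2
  have hblock : ∏ j : Fin 5, (1 - q ^ (n * 5 + j + 1)) =
      (1 - q ^ (5 * n + 1)) * (1 - q ^ (5 * n + 2)) * (1 - q ^ (5 * n + 3)) *
        (1 - q ^ (5 * n + 4)) * (1 - q ^ (5 * n + 5)) := by
    rw [Fin.prod_univ_five, mul_comm n 5]
    rfl
  rw [hblock]
  field_simp

theorem ramanujanThetaTerm_neg_pow_four_neg {K : Type*} [Field K] (q : K) (k : ℤ) :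
    ramanujanThetaTerm (-q ^ 4) (-q) k = (-1) ^ k * q ^ (k * (5 * k + 3) / 2) := by
  have hpred := natCast_triangular_sub_one k
  have hsign : (-1 : K) ^ (triangular k + triangular (k - 1)) = (-1) ^ k := by
    have hparity : ((triangular k + triangular (k - 1) : ℕ) : ℤ) = 2 * triangular (k - 1) + k := by
      push_cast
      linarith
    rw [← zpow_natCast, hparity, zpow_add₀ (neg_ne_zero.mpr one_ne_zero), zpow_mul]
    simp
  have hexp : k * (5 * k + 3) / 2 = (4 * triangular k + triangular (k - 1) : ℕ) := by
    refine Int.ediv_eq_of_eq_mul_left two_ne_zero ?_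
    push_cast
    linarith [two_mul_natCast_triangular k]
  rw [hexp, zpow_natCast, ← hsign, ramanujanThetaTerm, neg_pow (q ^ 4), neg_pow q, ← pow_mul]
  ring

theorem phi_a_jacobi_triple_product (q : ℂ) (hq : ‖q‖ < 1) :
    eulerPhi q * rrA q = ∑' k : ℤ, (-1 : ℂ) ^ k * q ^ (k * (5 * k + 3) / 2) := by
  have hbase : -q ^ 4 * -q = q ^ 5 := by ring
  have hnorm : ‖-q ^ 4 * -q‖ < 1 := by
    rw [hbase, norm_pow]
    exact pow_lt_one₀ (norm_nonneg q) hq (by norm_num)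
  calc eulerPhi q * rrA q
      = ∏' n : ℕ, (1 - q ^ (5 * n + 5)) * ((1 - q ^ (5 * n + 4)) * (1 - q ^ (5 * n + 1))) :=
        eulerPhi_mul_rrA hq
    _ = ∏' n : ℕ, (1 - (-q ^ 4 * -q) ^ (n + 1)) *
          ((1 + -q ^ 4 * (-q ^ 4 * -q) ^ n) * (1 + -q * (-q ^ 4 * -q) ^ n)) := by
        refine tprod_congr fun n => ?_
        rw [hbase]
        ring
    _ = ∑' k : ℤ, ramanujanThetaTerm (-q ^ 4) (-q) k := jacobi_triple_product hnorm
    _ = ∑' k : ℤ, (-1 : ℂ) ^ k * q ^ (k * (5 * k + 3) / 2) :=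
        tsum_congr (ramanujanThetaTerm_neg_pow_four_neg q)
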